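/- Let p, q ∈ [0,1]. For every 2×2 complex matrix ρ, the single-qubit quantum-switch output Σ_{i,j∈{1,2}} Ŵ_{ij} (ρ ⊗ |+⟩⟨+|) Ŵ_{ij}†, where Ŵ_{ij} = D_i E_j ⊗ |0⟩⟨0| + E_j D_i ⊗ |1⟩⟨1|, equals [ (1−p)(1−q)·ρ + (1−p)q·Z ρ Z† + p(1−q)·X ρ X† ] ⊗ |+⟩⟨+| + pq·(X·Z) ρ (X·Z)† ⊗ |−⟩⟨−|; in particular, the |−⟩-heralded branch is pq times a unitary conjugate of ρ, so that (X·Z)† [(X·Z) ρ (X·Z)†] (X·Z) = ρ recovers ρ exactly. -/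

import Mathlib

open Matrix Kronecker Complex

noncomputable section

def PX : Matrix (Fin 2) (Fin 2) ℂ := !![0, 1; 1, 0]
def PZ : Matrix (Fin 2) (Fin 2) ℂ := !![1, 0; 0, -1]
def I2 : Matrix (Fin 2) (Fin 2) ℂ := 1

def ket0 : Fin 2 → ℂ := ![1, 0]
def ket1 : Fin 2 → ℂ := ![0, 1]
def ketPlus : Fin 2 → ℂ := ((Real.sqrt 2 : ℂ))⁻¹ • (ket0 + ket1)
def ketMinus : Fin 2 → ℂ := ((Real.sqrt 2 : ℂ))⁻¹ • (ket0 - ket1)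

def proj (v : Fin 2 → ℂ) : Matrix (Fin 2) (Fin 2) ℂ := vecMulVec v (star v)

/-- Kronecker product, flattened to `Fin (m*n)` indices (row-major). -/
def kron {m n : ℕ} (A : Matrix (Fin m) (Fin m) ℂ) (B : Matrix (Fin n) (Fin n) ℂ) :
    Matrix (Fin (m * n)) (Fin (m * n)) ℂ :=
  Matrix.reindex finProdFinEquiv finProdFinEquiv (A ⊗ₖ B)

/-- Bit-flip channel Kraus operators: D₁ = √(1-p)·I₂, D₂ = √p·X. -/
def Dk (p : ℝ) : Fin 2 → Matrix (Fin 2) (Fin 2) ℂ :=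
  ![(Real.sqrt (1 - p) : ℂ) • I2, (Real.sqrt p : ℂ) • PX]

/-- Phase-flip channel Kraus operators: E₁ = √(1-q)·I₂, E₂ = √q·Z. -/
def Ek (q : ℝ) : Fin 2 → Matrix (Fin 2) (Fin 2) ℂ :=
  ![(Real.sqrt (1 - q) : ℂ) • I2, (Real.sqrt q : ℂ) • PZ]

/-- Single-qubit quantum-switch Kraus operators Ŵ_{ij} = DᵢEⱼ ⊗ |0⟩⟨0| + EⱼDᵢ ⊗ |1⟩⟨1|. -/
def Wh (p q : ℝ) (i j : Fin 2) : Matrix (Fin 4) (Fin 4) ℂ :=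
  kron (Dk p i * Ek q j) (proj ket0) + kron (Ek q j * Dk p i) (proj ket1)

/-!
The switch of two operators `A` and `B` is `AB ⊗ |0⟩⟨0| + BA ⊗ |1⟩⟨1|`. If they commute, it is
`AB ⊗ 1` and leaves the control alone; if they anticommute, the sign moves to the control and it is
`AB ⊗ Z`, which turns `|+⟩` into `|−⟩`. Among the four pairs of Kraus operators only the pair of two
errors, of weight `pq`, anticommutes, so its branch is heralded by `|−⟩`.
-/

section Kron

variable {m n : ℕ}

theorem kron_mul_kron (A C : Matrix (Fin m) (Fin m) ℂ) (B D : Matrix (Fin n) (Fin n) ℂ) :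
    kron A B * kron C D = kron (A * C) (B * D) := by
  simp only [kron, reindex_apply, mul_kronecker_mul, submatrix_mul_equiv]

theorem conjTranspose_kron (A : Matrix (Fin m) (Fin m) ℂ) (B : Matrix (Fin n) (Fin n) ℂ) :
    (kron A B)ᴴ = kron Aᴴ Bᴴ := by
  simp only [kron, conjTranspose_reindex, conjTranspose_kronecker]

theorem kron_conj (A ρ : Matrix (Fin m) (Fin m) ℂ) (B σ : Matrix (Fin n) (Fin n) ℂ) :
    kron A B * kron ρ σ * (kron A B)ᴴ = kron (A * ρ * Aᴴ) (B * σ * Bᴴ) := by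
  rw [conjTranspose_kron, kron_mul_kron, kron_mul_kron]

theorem add_kron (A C : Matrix (Fin m) (Fin m) ℂ) (B : Matrix (Fin n) (Fin n) ℂ) :
    kron (A + C) B = kron A B + kron C B :=
  congrArg (reindex _ _) (add_kronecker A C B)

theorem kron_add (A : Matrix (Fin m) (Fin m) ℂ) (B D : Matrix (Fin n) (Fin n) ℂ) :
    kron A (B + D) = kron A B + kron A D :=
  congrArg (reindex _ _) (kronecker_add A B D)

theorem smul_kron {R : Type*} [SMul R ℂ] [IsScalarTower R ℂ ℂ] (r : R)
    (A : Matrix (Fin m) (Fin m) ℂ) (B : Matrix (Fin n) (Fin n) ℂ) :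
    kron (r • A) B = r • kron A B :=
  congrArg (reindex _ _) (smul_kronecker r A B)

theorem neg_kron_eq_kron_neg (A : Matrix (Fin m) (Fin m) ℂ) (B : Matrix (Fin n) (Fin n) ℂ) :
    kron (-A) B = kron A (-B) := by
  ext i j
  simp only [kron, reindex_apply, submatrix_apply, kroneckerMap_apply, Matrix.neg_apply, neg_mul,
    mul_neg]

end Kron

theorem proj_apply (v : Fin 2 → ℂ) (i j : Fin 2) : proj v i j = v i * star (v j) := rfl

theorem mul_proj_mul_conjTranspose (M : Matrix (Fin 2) (Fin 2) ℂ) (v : Fin 2 → ℂ) :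
    M * proj v * Mᴴ = proj (M *ᵥ v) := by
  rw [proj, proj, mul_vecMulVec, vecMulVec_mul, star_mulVec]

theorem proj_ket0_add_proj_ket1 : proj ket0 + proj ket1 = 1 := by
  ext i j
  fin_cases i <;> fin_cases j <;> simp [Matrix.add_apply, proj_apply, ket0, ket1]

theorem proj_ket0_sub_proj_ket1 : proj ket0 - proj ket1 = PZ := by
  ext i j
  fin_cases i <;> fin_cases j <;> simp [Matrix.sub_apply, proj_apply, ket0, ket1, PZ]

theorem PZ_mulVec_ketPlus : PZ *ᵥ ketPlus = ketMinus := by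
  ext i
  fin_cases i <;> simp [PZ, ketPlus, ketMinus, ket0, ket1]

theorem PZ_mul_PX : PZ * PX = -(PX * PZ) := by
  simp [PX, PZ]

theorem PX_mem_unitaryGroup : PX ∈ unitaryGroup (Fin 2) ℂ := by
  rw [mem_unitaryGroup_iff, star_eq_conjTranspose]
  ext i j
  fin_cases i <;> fin_cases j <;> simp [PX, mul_apply]

theorem PZ_mem_unitaryGroup : PZ ∈ unitaryGroup (Fin 2) ℂ := by
  rw [mem_unitaryGroup_iff, star_eq_conjTranspose]
  ext i j
  fin_cases i <;> fin_cases j <;> simp [PZ, mul_apply]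

theorem sqrt_smul_conj {m n : Type*} [Fintype n] {a : ℝ} (ha : 0 ≤ a) (M : Matrix m n ℂ)
    (N : Matrix n n ℂ) :
    ((√a : ℂ) • M) * N * ((√a : ℂ) • M)ᴴ = a • (M * N * Mᴴ) := by
  have sqrt_mul_star : (√a : ℂ) * star (√a : ℂ) = (a : ℂ) := by
    rw [star_def, conj_ofReal, ← ofReal_mul, Real.mul_self_sqrt ha]
  rw [conjTranspose_smul, Matrix.smul_mul, Matrix.smul_mul, Matrix.mul_smul,
    smul_smul, sqrt_mul_star, Complex.coe_smul]

theorem unitary_conj_cancel {n : Type*} [Fintype n] [DecidableEq n] {U : Matrix n n ℂ}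
    (hU : U ∈ unitaryGroup n ℂ) (ρ : Matrix n n ℂ) : Uᴴ * (U * ρ * Uᴴ) * U = ρ := by
  have hUU : Uᴴ * U = 1 := mem_unitaryGroup_iff'.mp hU
  calc Uᴴ * (U * ρ * Uᴴ) * U = (Uᴴ * U) * ρ * (Uᴴ * U) := by simp only [Matrix.mul_assoc]
    _ = ρ := by rw [hUU, Matrix.one_mul, Matrix.mul_one]

/-- The Kraus operators `√(1 - p) • 1`, `√p • A` of the channel applying the error `A` with
probability `p`. It specializes to `Dk p` for `A = PX` and to `Ek p` for `A = PZ`. -/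
def flipKraus {m : ℕ} (p : ℝ) (A : Matrix (Fin m) (Fin m) ℂ) :
    Fin 2 → Matrix (Fin m) (Fin m) ℂ :=
  ![(√(1 - p) : ℂ) • 1, (√p : ℂ) • A]

/-- The quantum-switch operator of `A` and `B`: their order of application is controlled by a
qubit, which is the right tensor factor. `Wh p q i j` is its instance at `Dk p i` and `Ek q j`. -/
def switchKraus {m : ℕ} (A B : Matrix (Fin m) (Fin m) ℂ) :
    Matrix (Fin (m * 2)) (Fin (m * 2)) ℂ :=
  kron (A * B) (proj ket0) + kron (B * A) (proj ket1)

section Switch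

variable {m : ℕ}

theorem switchKraus_smul_smul (a b : ℂ) (A B : Matrix (Fin m) (Fin m) ℂ) :
    switchKraus (a • A) (b • B) = (a * b) • switchKraus A B := by
  simp only [switchKraus, smul_mul_smul_comm, mul_comm b a, smul_kron, smul_add]

theorem switchKraus_sqrt_smul_conj {a b : ℝ} (ha : 0 ≤ a) (hb : 0 ≤ b)
    (A B : Matrix (Fin m) (Fin m) ℂ) (N : Matrix (Fin (m * 2)) (Fin (m * 2)) ℂ) :
    switchKraus ((√a : ℂ) • A) ((√b : ℂ) • B) * N *
        (switchKraus ((√a : ℂ) • A) ((√b : ℂ) • B))ᴴ =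
      (a * b) • (switchKraus A B * N * (switchKraus A B)ᴴ) := by
  rw [switchKraus_smul_smul, ← ofReal_mul, ← Real.sqrt_mul ha, sqrt_smul_conj (mul_nonneg ha hb)]

variable {A B : Matrix (Fin m) (Fin m) ℂ}

theorem switchKraus_of_commute (h : Commute A B) : switchKraus A B = kron (A * B) 1 := by
  rw [switchKraus, ← h.eq, ← kron_add, proj_ket0_add_proj_ket1]

theorem switchKraus_of_anticommute (h : B * A = -(A * B)) :
    switchKraus A B = kron (A * B) PZ := by
  rw [switchKraus, h, neg_kron_eq_kron_neg, ← kron_add, ← sub_eq_add_neg, proj_ket0_sub_proj_ket1]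

theorem switchKraus_conj_of_commute (h : Commute A B) (ρ : Matrix (Fin m) (Fin m) ℂ)
    (σ : Matrix (Fin 2) (Fin 2) ℂ) :
    switchKraus A B * kron ρ σ * (switchKraus A B)ᴴ = kron ((A * B) * ρ * (A * B)ᴴ) σ := by
  rw [switchKraus_of_commute h, kron_conj, Matrix.one_mul, conjTranspose_one, Matrix.mul_one]

theorem switchKraus_conj_of_anticommute (h : B * A = -(A * B)) (ρ : Matrix (Fin m) (Fin m) ℂ)
    (σ : Matrix (Fin 2) (Fin 2) ℂ) :
    switchKraus A B * kron ρ σ * (switchKraus A B)ᴴ =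
      kron ((A * B) * ρ * (A * B)ᴴ) (PZ * σ * PZᴴ) := by
  rw [switchKraus_of_anticommute h, kron_conj]

theorem sum_switchKraus_flipKraus_conj {p q : ℝ} (hp : p ∈ Set.Icc (0 : ℝ) 1)
    (hq : q ∈ Set.Icc (0 : ℝ) 1) (h : B * A = -(A * B)) (ρ : Matrix (Fin m) (Fin m) ℂ)
    (σ : Matrix (Fin 2) (Fin 2) ℂ) :
    ∑ i, ∑ j, switchKraus (flipKraus p A i) (flipKraus q B j) * kron ρ σ *
        (switchKraus (flipKraus p A i) (flipKraus q B j))ᴴ =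
      kron (((1 - p) * (1 - q)) • ρ + ((1 - p) * q) • (B * ρ * Bᴴ)
          + (p * (1 - q)) • (A * ρ * Aᴴ)) σ
        + (p * q) • kron ((A * B) * ρ * (A * B)ᴴ) (PZ * σ * PZᴴ) := by
  have hp' : 0 ≤ 1 - p := sub_nonneg.2 hp.2
  have hq' : 0 ≤ 1 - q := sub_nonneg.2 hq.2
  simp only [Fin.sum_univ_two, flipKraus, cons_val_zero, cons_val_one]
  rw [switchKraus_sqrt_smul_conj hp' hq', switchKraus_sqrt_smul_conj hp' hq.1,
    switchKraus_sqrt_smul_conj hp.1 hq', switchKraus_sqrt_smul_conj hp.1 hq.1,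
    switchKraus_conj_of_commute (Commute.one_left 1), switchKraus_conj_of_commute (.one_left B),
    switchKraus_conj_of_commute (.one_right A), switchKraus_conj_of_anticommute h]
  simp only [Matrix.one_mul, Matrix.mul_one, conjTranspose_one, add_kron, smul_kron, add_assoc]

theorem single_qubit_quantum_switch_general {p q : ℝ} (hp : p ∈ Set.Icc (0 : ℝ) 1)
    (hq : q ∈ Set.Icc (0 : ℝ) 1) (hA : A ∈ unitaryGroup (Fin m) ℂ)
    (hB : B ∈ unitaryGroup (Fin m) ℂ) (h : B * A = -(A * B)) (ρ : Matrix (Fin m) (Fin m) ℂ) :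
    (∑ i, ∑ j, switchKraus (flipKraus p A i) (flipKraus q B j) * kron ρ (proj ketPlus) *
        (switchKraus (flipKraus p A i) (flipKraus q B j))ᴴ =
      kron (((1 - p) * (1 - q)) • ρ + ((1 - p) * q) • (B * ρ * Bᴴ)
          + (p * (1 - q)) • (A * ρ * Aᴴ)) (proj ketPlus)
        + (p * q) • kron ((A * B) * ρ * (A * B)ᴴ) (proj ketMinus)) ∧
      (A * B)ᴴ * ((A * B) * ρ * (A * B)ᴴ) * (A * B) = ρ := by
  refine ⟨?_, unitary_conj_cancel (mul_mem hA hB) ρ⟩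
  rw [sum_switchKraus_flipKraus_conj hp hq h, mul_proj_mul_conjTranspose, PZ_mulVec_ketPlus]

end Switch

theorem single_qubit_quantum_switch (p q : ℝ) (hp : p ∈ Set.Icc (0 : ℝ) 1)
    (hq : q ∈ Set.Icc (0 : ℝ) 1) (ρ : Matrix (Fin 2) (Fin 2) ℂ) :
    (∑ i : Fin 2, ∑ j : Fin 2, Wh p q i j * kron ρ (proj ketPlus) * (Wh p q i j)ᴴ =
      kron (((1 - p) * (1 - q) : ℝ) • ρ
          + ((1 - p) * q : ℝ) • (PZ * ρ * PZᴴ)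
          + (p * (1 - q) : ℝ) • (PX * ρ * PXᴴ)) (proj ketPlus)
      + (p * q : ℝ) • kron ((PX * PZ) * ρ * (PX * PZ)ᴴ) (proj ketMinus))
    ∧ (PX * PZ)ᴴ * ((PX * PZ) * ρ * (PX * PZ)ᴴ) * (PX * PZ) = ρ :=
  single_qubit_quantum_switch_general hp hq PX_mem_unitaryGroup PZ_mem_unitaryGroup PZ_mul_PX ρ

end
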